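/- Let p, q ≥ 1 and r > 1 be real numbers. Let B_1, B_2 : ℝ² → ℝ be linear maps and let J be a real positive semidefinite 2 × 2 matrix (possibly zero). For measurable f, g : ℝ → [0, ∞) define (f ⋆_{B_1,B_2,J} g)(x) = ∫_ℝ f(B_1(x, y)) g(B_2(x, y)) exp(−⟨(x, y), J (x, y)⟩) d_N y for x ∈ ℝ, and define C = sup{ ‖f ⋆_{B_1,B_2,J} g‖_{L^r(d_N)} : ‖f‖_{L^p(d_N)} = ‖g‖_{L^q(d_N)} = 1 }, the supremum taken in [0, ∞]. Then C = sup{ ‖f ⋆_{B_1,B_2,J} g‖_{L^r(d_N)} : ‖f‖_{L^p(d_N)} = ‖g‖_{L^q(d_N)} = 1, and f, g are centered Gaussian functions, i.e. f(x) = c_1 e^{−s x²/2} and g(x) = c_2 e^{−t x²/2} with c_1, c_2, s, t > 0 }. -/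

import Mathlib

open MeasureTheory Real Matrix

/-- The normalized Lebesgue measure `d_N x = (2π)^(−1/2) dx` on `ℝ`. -/
noncomputable def normalizedLebesgueR : Measure ℝ :=
  ENNReal.ofReal ((2 * Real.pi) ^ (-(1 : ℝ) / 2)) • (volume : Measure ℝ)

/-- The generalized Gaussian-weighted convolution
`(f ⋆_{B₁,B₂,J} g)(x) = ∫ f(B₁(x,y)) g(B₂(x,y)) exp(−⟨(x,y), J(x,y)⟩) d_N y`. -/
noncomputable def gaussConv (B₁ B₂ : (Fin 2 → ℝ) →ₗ[ℝ] ℝ)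
    (J : Matrix (Fin 2) (Fin 2) ℝ) (f g : ℝ → ℝ) : ℝ → ℝ :=
  fun x => ∫ y, f (B₁ ![x, y]) * g (B₂ ![x, y])
      * Real.exp (-(![x, y] ⬝ᵥ J.mulVec ![x, y])) ∂normalizedLebesgueR

/-!
By `L^r`–`L^{r'}` duality, the assertion concerns the form
`L(f) = ∫ ∏ i, f i (B i x) ^ c i * exp (-⟨x, Q x⟩) dx` on densities `f i` of prescribed masses, and
it amounts to Lieb's theorem `L(f) ≤ S`, where `S` is the supremum of `L` over centered Gaussian
densities. Let `T i` be the increasing map that transports `f i` onto the Gaussian density of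
exponent `σ i`. The map `Θ x = Q x + ∑ i, c i * σ i * T i (B i x) • B i` has the positive definite
derivative `Q + ∑ i, c i * σ i * T i' (B i x) • (B i)ᵀ B i`, so it is injective, and testing `S` on
the Gaussians of exponents `σ i * T i' (B i x)` bounds its Jacobian from below. Completing squares
bounds the product of the Gaussian factors and the weight by a Gaussian in `Θ x`, and the change of
variables `Θ` gives `L(f) * L(g_σ) ≤ S ^ 2` for every Gaussian input `g_σ`. Taking the supremum over
`σ` yields `L(f) ≤ S` for continuous positive `f`, and Fatou's lemma gives the general case.
-/

namespace LiebCorollary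

open Filter Topology
open scoped ENNReal

section MonotoneTransport

open Set

variable {f g : ℝ → ℝ}

lemma hasDerivAt_integral_Iic (hc : Continuous f) (hi : Integrable f) (x : ℝ) :
    HasDerivAt (fun u ↦ ∫ t in Iic u, f t) (f x) x := by
  have hsplit : (fun u ↦ ∫ t in Iic u, f t) = fun u ↦ (∫ t in Iic 0, f t) + ∫ t in 0..u, f t :=
    funext fun u ↦ by
      rw [← intervalIntegral.integral_Iic_sub_Iic hi.integrableOn hi.integrableOn, add_sub_cancel]
  rw [hsplit]
  exact (hc.integral_hasStrictDerivAt 0 x).hasDerivAt.const_add _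

lemma strictMono_integral_Iic (hc : Continuous f) (hpos : ∀ x, 0 < f x) (hi : Integrable f) :
    StrictMono fun u ↦ ∫ t in Iic u, f t :=
  strictMono_of_hasDerivAt_pos (hasDerivAt_integral_Iic hc hi) hpos

lemma range_integral_Iic (hc : Continuous f) (hpos : ∀ x, 0 < f x) (hi : Integrable f) :
    range (fun u ↦ ∫ t in Iic u, f t) = Ioo 0 (∫ t, f t) := by
  have hmono := strictMono_integral_Iic hc hpos hi
  have hbot : Tendsto (fun u ↦ ∫ t in Iic u, f t) atBot (𝓝 0) :=
    tendsto_integral_Iic_zero tendsto_id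
  have htop : Tendsto (fun u ↦ ∫ t in Iic u, f t) atTop (𝓝 (∫ t, f t)) :=
    (aecover_Iic tendsto_id).integral_tendsto_of_countably_generated hi
  have hcont : Continuous fun u ↦ ∫ t in Iic u, f t :=
    continuous_iff_continuousAt.2 fun x ↦ (hasDerivAt_integral_Iic hc hi x).continuousAt
  refine Subset.antisymm (range_subset_iff.2 fun x ↦ ⟨?_, ?_⟩) ?_
  · exact (hmono.monotone.le_of_tendsto hbot (x - 1)).trans_lt (hmono (sub_one_lt x))
  · exact (hmono (lt_add_one x)).trans_le (hmono.monotone.ge_of_tendsto htop (x + 1))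
  · rw [← image_univ]
    exact isPreconnected_univ.intermediate_value_Ioo (by simp) (by simp) hcont.continuousOn
      hbot htop

lemma exists_continuous_integral_Iic_eq (hcf : Continuous f) (hpf : ∀ x, 0 < f x)
    (hif : Integrable f) (hcg : Continuous g) (hpg : ∀ x, 0 < g x) (hig : Integrable g)
    (heq : ∫ t, f t = ∫ t, g t) :
    ∃ T : ℝ → ℝ, Continuous T ∧ ∀ x, ∫ t in Iic (T x), g t = ∫ t in Iic x, f t := by
  have hmf := strictMono_integral_Iic hcf hpf hif
  have hmg := strictMono_integral_Iic hcg hpg hig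
  have hrange : range (fun u ↦ ∫ t in Iic u, f t) = range (fun u ↦ ∫ t in Iic u, g t) := by
    rw [range_integral_Iic hcf hpf hif, range_integral_Iic hcg hpg hig, heq]
  choose T hT using fun x ↦
    show ∃ y, ∫ t in Iic y, g t = ∫ t in Iic x, f t from hrange.subset (mem_range_self x)
  have hmono : StrictMono T := fun x y hxy ↦
    hmg.lt_iff_lt.1 (by simpa only [hT] using hmf hxy)
  have hsurj : Function.Surjective T := fun y ↦ by
    obtain ⟨x, hx⟩ := hrange.superset (mem_range_self y)
    exact ⟨x, hmg.injective ((hT x).trans hx)⟩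
  exact ⟨T, hmono.monotone.continuous_of_surjective hsurj, hT⟩

lemma exists_monotone_transport (hcf : Continuous f) (hpf : ∀ x, 0 < f x) (hif : Integrable f)
    (hcg : Continuous g) (hpg : ∀ x, 0 < g x) (hig : Integrable g)
    (heq : ∫ t, f t = ∫ t, g t) :
    ∃ T T' : ℝ → ℝ, (∀ x, HasDerivAt T (T' x) x) ∧ (∀ x, 0 < T' x) ∧
      ∀ x, f x = T' x * g (T x) := by
  obtain ⟨T, hTc, hT⟩ := exists_continuous_integral_Iic_eq hcf hpf hif hcg hpg hig heq
  refine ⟨T, fun x ↦ (g (T x))⁻¹ * f x, fun x ↦ ?_, fun x ↦ mul_pos (inv_pos.2 (hpg _)) (hpf _),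
    fun x ↦ by field_simp [(hpg (T x)).ne']⟩
  have hstrict : HasStrictDerivAt (fun u ↦ ∫ t in Iic u, g t) (g (T x)) (T x) :=
    hasStrictDerivAt_of_hasDerivAt_of_continuousAt
      (Eventually.of_forall (hasDerivAt_integral_Iic hcg hig)) hcg.continuousAt
  have hne : g (T x) ≠ 0 := (hpg _).ne'
  have hinv := (hstrict.to_localInverse hne).hasDerivAt
  rw [hT x] at hinv
  refine (hinv.comp x (hasDerivAt_integral_Iic hcf hif x)).congr_of_eventuallyEq ?_
  filter_upwards [hTc.continuousAt.eventually (hstrict.eventually_left_inverse hne)] with y hy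
  rw [Function.comp_apply, ← hT y]
  exact hy.symm

end MonotoneTransport

section GaussianIntegral

variable {n : Type*} [Fintype n]

lemma lintegral_exp_neg_dotProduct_self :
    ∫⁻ x : n → ℝ, ENNReal.ofReal (rexp (-(x ⬝ᵥ x))) = ENNReal.ofReal √(π ^ Fintype.card n) := by
  have hprod : (fun x : n → ℝ ↦ rexp (-(x ⬝ᵥ x))) = fun x ↦ ∏ i, rexp (-1 * x i ^ 2) := by
    ext x
    rw [← Real.exp_sum, dotProduct, ← Finset.sum_neg_distrib]
    simp only [neg_mul, one_mul, sq]
  have hint : Integrable fun x : n → ℝ ↦ ∏ i, rexp (-1 * x i ^ 2) :=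
    Integrable.fintype_prod fun _ ↦ integrable_exp_neg_mul_sq one_pos
  rw [← ofReal_integral_eq_lintegral_ofReal (hprod ▸ hint)
    (Eventually.of_forall fun _ ↦ (exp_pos _).le), hprod,
    integral_fintype_prod_volume_eq_pow fun t : ℝ ↦ rexp (-1 * t ^ 2), integral_gaussian, div_one,
    sqrt_eq_rpow, sqrt_eq_rpow, ← rpow_natCast, ← rpow_natCast, ← rpow_mul pi_nonneg,
    ← rpow_mul pi_nonneg, mul_comm]

lemma lintegral_comp_mulVec [DecidableEq n] {L : Matrix n n ℝ} (hL : L.det ≠ 0) {h : (n → ℝ) → ℝ≥0∞}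
    (hh : Measurable h) :
    ∫⁻ x, h (L *ᵥ x) = ENNReal.ofReal |L.det⁻¹| * ∫⁻ x, h x := by
  rw [← smul_eq_mul, ← lintegral_smul_measure, ← Real.map_matrix_volume_pi_eq_smul_volume_pi hL,
    lintegral_map hh (LinearMap.continuous_of_finiteDimensional _).measurable]
  simp only [toLin'_apply]

open scoped MatrixOrder in
lemma lintegral_exp_neg_of_posDef [DecidableEq n] {M : Matrix n n ℝ} (hM : M.PosDef) :
    ∫⁻ x : n → ℝ, ENNReal.ofReal (rexp (-(x ⬝ᵥ M *ᵥ x))) =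
      ENNReal.ofReal √(π ^ Fintype.card n / M.det) := by
  obtain ⟨L, rfl⟩ := CStarAlgebra.nonneg_iff_eq_star_mul_self.1 hM.posSemidef.nonneg
  have hdet : (star L * L).det = L.det ^ 2 := by
    rw [det_mul, star_eq_conjTranspose, conjTranspose_eq_transpose_of_trivial, det_transpose, sq]
  have hL : L.det ≠ 0 := fun h ↦ hM.det_pos.ne' (by rw [hdet, h, zero_pow two_ne_zero])
  have hquad (x : n → ℝ) : x ⬝ᵥ (star L * L) *ᵥ x = (L *ᵥ x) ⬝ᵥ (L *ᵥ x) := by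
    rw [← mulVec_mulVec, star_eq_conjTranspose, conjTranspose_eq_transpose_of_trivial,
      dotProduct_mulVec, vecMul_transpose]
  simp only [hquad]
  rw [lintegral_comp_mulVec hL (h := fun x ↦ ENNReal.ofReal (rexp (-(x ⬝ᵥ x)))) (by fun_prop),
    lintegral_exp_neg_dotProduct_self, hdet, sqrt_div' _ (sq_nonneg _), sqrt_sq_eq_abs, abs_inv,
    ← ENNReal.ofReal_mul (by positivity), inv_mul_eq_div]

lemma posDef_of_lintegral_exp_neg_ne_top {M : Matrix n n ℝ} (hM : M.PosSemidef)
    (hfin : ∫⁻ x : n → ℝ, ENNReal.ofReal (rexp (-(x ⬝ᵥ M *ᵥ x))) ≠ ⊤) : M.PosDef := by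
  classical
  refine hM.posDef_iff_det_ne_zero.2 fun hdet ↦ hfin ?_
  -- If `det M = 0`, the integrals for `M + ε • 1` are lower bounds that blow up as `ε → 0`.
  have hlower (ε : ℝ) (hε : 0 < ε) : ENNReal.ofReal √(π ^ Fintype.card n / (M + ε • 1).det) ≤
      ∫⁻ x : n → ℝ, ENNReal.ofReal (rexp (-(x ⬝ᵥ M *ᵥ x))) := by
    rw [← lintegral_exp_neg_of_posDef (PosDef.posSemidef_add hM (PosDef.one.smul hε))]
    refine lintegral_mono fun x ↦ ENNReal.ofReal_le_ofReal (exp_le_exp.2 (neg_le_neg ?_))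
    rw [add_mulVec, smul_mulVec, one_mulVec, dotProduct_add, dotProduct_smul, smul_eq_mul]
    exact le_add_of_nonneg_right (mul_nonneg hε.le (dotProduct_self_star_nonneg x))
  have hdet_tendsto : Tendsto (fun ε : ℝ ↦ (M + ε • 1).det) (𝓝[>] 0) (𝓝[>] 0) := by
    refine tendsto_nhdsWithin_iff.2 ⟨?_, eventually_mem_nhdsWithin.mono fun ε hε ↦
      (PosDef.posSemidef_add hM (PosDef.one.smul hε)).det_pos⟩
    have hcont : Continuous fun ε : ℝ ↦ (M + ε • (1 : Matrix n n ℝ)).det := by fun_prop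
    simpa [hdet] using (hcont.tendsto 0).mono_left nhdsWithin_le_nhds
  have hblowup : Tendsto (fun ε : ℝ ↦ ENNReal.ofReal √(π ^ Fintype.card n / (M + ε • 1).det))
      (𝓝[>] 0) (𝓝 ⊤) :=
    ENNReal.tendsto_ofReal_atTop.comp <| tendsto_sqrt_atTop.comp <|
      (tendsto_inv_nhdsGT_zero.comp hdet_tendsto).const_mul_atTop (by positivity)
  exact top_le_iff.1 (le_of_tendsto hblowup (eventually_mem_nhdsWithin.mono hlower))

end GaussianIntegral

section MonotoneMap

variable {n : Type*} [Fintype n] [DecidableEq n] {Φ : (n → ℝ) → n → ℝ}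
  {A : (n → ℝ) → Matrix n n ℝ}

lemma injective_of_hasFDerivAt_posDef
    (hΦ : ∀ x, HasFDerivAt Φ (toLin' (A x)).toContinuousLinearMap x) (hA : ∀ x, (A x).PosDef) :
    Function.Injective Φ := by
  intro x y hxy
  by_contra hne
  have hderiv (t : ℝ) : HasDerivAt (fun t : ℝ ↦ (y - x) ⬝ᵥ Φ (x + t • (y - x)))
      ((y - x) ⬝ᵥ A (x + t • (y - x)) *ᵥ (y - x)) t := by
    have hline : HasDerivAt (fun t : ℝ ↦ x + t • (y - x)) (y - x) t := by
      simpa using ((hasDerivAt_id t).smul_const (y - x)).const_add x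
    simpa [dotProduct] using HasDerivAt.fun_sum fun i _ ↦
      (hasDerivAt_pi.1 ((hΦ _).comp_hasDerivAt t hline) i).const_mul ((y - x) i)
  have hmono := strictMono_of_hasDerivAt_pos hderiv fun t ↦
    (hA _).dotProduct_mulVec_pos (sub_ne_zero.2 (Ne.symm hne))
  simpa [hxy] using hmono one_pos

lemma lintegral_det_mul_comp_le
    (hΦ : ∀ x, HasFDerivAt Φ (toLin' (A x)).toContinuousLinearMap x) (hA : ∀ x, (A x).PosDef)
    (h : (n → ℝ) → ℝ≥0∞) :
    ∫⁻ x, ENNReal.ofReal (A x).det * h (Φ x) ≤ ∫⁻ x, h x := by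
  have hdet (x : n → ℝ) : |(toLin' (A x)).toContinuousLinearMap.det| = (A x).det := by
    rw [ContinuousLinearMap.det, LinearMap.coe_toContinuousLinearMap, LinearMap.det_toLin',
      abs_of_pos (hA x).det_pos]
  calc ∫⁻ x, ENNReal.ofReal (A x).det * h (Φ x)
      = ∫⁻ x in Φ '' Set.univ, h x := by
        rw [lintegral_image_eq_lintegral_abs_det_fderiv_mul volume MeasurableSet.univ
          (fun x _ ↦ (hΦ x).hasFDerivWithinAt) (injective_of_hasFDerivAt_posDef hΦ hA).injOn]
        simp only [hdet, Measure.restrict_univ]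
    _ ≤ ∫⁻ x, h x := setLIntegral_le_lintegral _ _

end MonotoneMap

section WeightedForm

variable {n ι : Type*} [Fintype ι]

/-- The matrix of the quadratic form `x ↦ ⟨x, Q x⟩ + ∑ i, w i * (B x) i ^ 2`: the exponent of the
Brascamp–Lieb integrand when its `i`-th input is the Gaussian with exponent `w i`. -/
def weightedForm (Q : Matrix n n ℝ) (B : Matrix ι n ℝ) (w : ι → ℝ) : Matrix n n ℝ :=
  Q + Bᵀ * of fun i ↦ w i • B i

variable {Q : Matrix n n ℝ} {B : Matrix ι n ℝ} {w : ι → ℝ}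

lemma weightedForm_posSemidef [Finite n] (hQ : Q.PosSemidef) (hw : 0 ≤ w) :
    (weightedForm Q B w).PosSemidef := by
  classical
  have hscale : (of fun i ↦ w i • B i) = diagonal w * B := ext fun i j ↦ (diagonal_mul w B i j).symm
  rw [weightedForm, hscale, ← Matrix.mul_assoc, ← conjTranspose_eq_transpose_of_trivial]
  exact hQ.add ((PosSemidef.diagonal hw).conjTranspose_mul_mul_same B)

variable [Fintype n]

lemma weightedForm_mulVec (x : n → ℝ) :
    weightedForm Q B w *ᵥ x = Q *ᵥ x + Bᵀ *ᵥ (w * B *ᵥ x) := by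
  have hscale : (of fun i ↦ w i • B i) *ᵥ x = w * B *ᵥ x :=
    funext fun i ↦ smul_dotProduct (w i) (B i) x
  rw [weightedForm, add_mulVec, ← mulVec_mulVec, hscale]

lemma dotProduct_weightedForm_mulVec (x : n → ℝ) :
    x ⬝ᵥ weightedForm Q B w *ᵥ x = x ⬝ᵥ Q *ᵥ x + ∑ i, w i * (B *ᵥ x) i ^ 2 := by
  rw [weightedForm_mulVec, dotProduct_add, dotProduct_mulVec x Bᵀ, vecMul_transpose]
  congr 1
  exact Finset.sum_congr rfl fun i _ ↦ by rw [Pi.mul_apply]; ring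

/-- Expand `0 ≤ ⟨x - y, Q (x - y)⟩ + ∑ i, w i * (t i - (B y) i) ^ 2`: by `h`, the cross terms add up
to `-2 * ⟨y, weightedForm Q B w y⟩`. -/
lemma dotProduct_weightedForm_le (hQ : Q.PosSemidef) (hw : 0 ≤ w) {x y : n → ℝ} {t : ι → ℝ}
    (h : weightedForm Q B w *ᵥ y = Q *ᵥ x + Bᵀ *ᵥ (w * t)) :
    y ⬝ᵥ weightedForm Q B w *ᵥ y ≤ x ⬝ᵥ Q *ᵥ x + ∑ i, w i * t i ^ 2 := by
  have hQ_symm : y ⬝ᵥ Q *ᵥ x = x ⬝ᵥ Q *ᵥ y := by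
    rw [dotProduct_mulVec, dotProduct_comm, ← mulVec_transpose,
      ← conjTranspose_eq_transpose_of_trivial, hQ.isHermitian.eq]
  have hQ_sub : 0 ≤ x ⬝ᵥ Q *ᵥ x + y ⬝ᵥ Q *ᵥ y - 2 * (y ⬝ᵥ Q *ᵥ x) := by
    have := hQ.dotProduct_mulVec_nonneg (x - y)
    simp only [star_trivial, mulVec_sub, dotProduct_sub, sub_dotProduct] at this
    linarith
  have hsq : 0 ≤ ∑ i, (w i * t i ^ 2 + w i * (B *ᵥ y) i ^ 2 - 2 * ((B *ᵥ y) i * (w i * t i))) :=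
    Finset.sum_nonneg fun i _ ↦ by nlinarith [mul_nonneg (hw i) (sq_nonneg (t i - (B *ᵥ y) i))]
  have hpair := congrArg (y ⬝ᵥ ·) h
  simp only [dotProduct_weightedForm_mulVec, dotProduct_add, dotProduct_mulVec y Bᵀ,
    vecMul_transpose] at hpair ⊢
  rw [Finset.sum_sub_distrib, Finset.sum_add_distrib, ← Finset.mul_sum] at hsq
  simp only [dotProduct, Pi.mul_apply] at hpair hsq hQ_sub ⊢
  linarith

end WeightedForm

section Gradient

lemma hasFDerivAt_mulVec {k l : Type*} [Finite k] [Fintype l] (M : Matrix k l ℝ) (x : l → ℝ) :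
    HasFDerivAt (M *ᵥ ·) M.mulVecLin.toContinuousLinearMap x :=
  M.mulVecLin.toContinuousLinearMap.hasFDerivAt

variable {n ι : Type*} [Fintype n] [DecidableEq n] [Fintype ι]

lemma hasFDerivAt_mulVec_add_transpose_mulVec (Q : Matrix n n ℝ) {B : Matrix ι n ℝ}
    {T : ι → ℝ → ℝ} {T' : ι → ℝ} {x : n → ℝ} (hT : ∀ i, HasDerivAt (T i) (T' i) ((B *ᵥ x) i)) :
    HasFDerivAt (fun x ↦ Q *ᵥ x + Bᵀ *ᵥ fun i ↦ T i ((B *ᵥ x) i))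
      (toLin' (weightedForm Q B T')).toContinuousLinearMap x := by
  have hcoord (i : ι) := (hT i).comp_hasFDerivAt x (hasFDerivAt_pi'.1 (hasFDerivAt_mulVec B x) i)
  refine ((hasFDerivAt_mulVec Q x).add
    ((hasFDerivAt_mulVec Bᵀ _).comp x (hasFDerivAt_pi.2 hcoord))).congr_fderiv ?_
  refine ContinuousLinearMap.ext fun v ↦ ?_
  exact (weightedForm_mulVec v).symm

end Gradient

section BrascampLieb

variable {n ι : Type*} [Fintype n] [Fintype ι]

/-- The Brascamp–Lieb form `∫ ∏ i, f i (⟨B i, x⟩) ^ c i * exp (-⟨x, Q x⟩) dx` with Gaussian weight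
`Q`, whose linear maps are the functionals given by the rows of `B`. It takes values in `[0, ∞]`,
and its inputs `f i` are meant to be nonnegative. -/
noncomputable def blForm (Q : Matrix n n ℝ) (B : Matrix ι n ℝ) (c : ι → ℝ) (f : ι → ℝ → ℝ) : ℝ≥0∞ :=
  ∫⁻ x : n → ℝ, ENNReal.ofReal ((∏ i, f i ((B *ᵥ x) i) ^ c i) * rexp (-(x ⬝ᵥ Q *ᵥ x)))

/-- The centered Gaussian `x ↦ m * √(τ / π) * exp (-τ * x ^ 2)` of integral `m`. -/
noncomputable def gaussianOfMass (m τ x : ℝ) : ℝ :=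
  m * √(τ / π) * rexp (-τ * x ^ 2)

variable {m τ : ℝ}

@[fun_prop]
lemma continuous_gaussianOfMass : Continuous (gaussianOfMass m τ) := by
  unfold gaussianOfMass; fun_prop

lemma gaussianOfMass_pos (hm : 0 < m) (hτ : 0 < τ) (x : ℝ) : 0 < gaussianOfMass m τ x := by
  unfold gaussianOfMass; positivity

lemma integrable_gaussianOfMass (hτ : 0 < τ) : Integrable (gaussianOfMass m τ) :=
  (integrable_exp_neg_mul_sq hτ).const_mul _

lemma integral_gaussianOfMass (hτ : 0 < τ) : ∫ x, gaussianOfMass m τ x = m := by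
  simp only [gaussianOfMass]
  rw [integral_const_mul, integral_gaussian, mul_assoc, ← sqrt_mul (by positivity),
    div_mul_div_cancel₀ pi_ne_zero, div_self hτ.ne', sqrt_one, mul_one]

variable {Q : Matrix n n ℝ} {B : Matrix ι n ℝ} {c m τ σ : ι → ℝ}

/-- The constant factor of the Brascamp–Lieb integrand when its inputs are the Gaussians
`gaussianOfMass (m i) (τ i)`. -/
noncomputable def gaussianFactor (c m τ : ι → ℝ) : ℝ :=
  ∏ i, (m i * √(τ i / π)) ^ c i

lemma gaussianFactor_pos (hm : ∀ i, 0 < m i) (hτ : ∀ i, 0 < τ i) : 0 < gaussianFactor c m τ :=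
  Finset.prod_pos fun i _ ↦ rpow_pos_of_pos
    (mul_pos (hm i) (sqrt_pos.2 (div_pos (hτ i) pi_pos))) _

lemma blForm_gaussianOfMass (hm : ∀ i, 0 < m i) (hτ : ∀ i, 0 < τ i) :
    blForm Q B c (fun i ↦ gaussianOfMass (m i) (τ i)) = ENNReal.ofReal (gaussianFactor c m τ) *
      ∫⁻ x : n → ℝ, ENNReal.ofReal (rexp (-(x ⬝ᵥ weightedForm Q B (c * τ) *ᵥ x))) := by
  rw [blForm, ← lintegral_const_mul _ (by fun_prop)]
  refine lintegral_congr fun x ↦ ?_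
  rw [← ENNReal.ofReal_mul (gaussianFactor_pos hm hτ).le, dotProduct_weightedForm_mulVec, neg_add,
    exp_add, mul_comm (rexp (-(x ⬝ᵥ Q *ᵥ x))), ← mul_assoc, gaussianFactor,
    ← Finset.sum_neg_distrib, exp_sum, ← Finset.prod_mul_distrib]
  congr 3 with i
  rw [gaussianOfMass, mul_rpow (mul_nonneg (hm i).le (sqrt_nonneg _)) (exp_pos _).le, ← exp_mul,
    Pi.mul_apply]
  ring_nf

lemma blForm_gaussianOfMass_of_posDef [DecidableEq n] (hm : ∀ i, 0 < m i) (hτ : ∀ i, 0 < τ i)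
    (hA : (weightedForm Q B (c * τ)).PosDef) :
    blForm Q B c (fun i ↦ gaussianOfMass (m i) (τ i)) = ENNReal.ofReal
      (gaussianFactor c m τ * √(π ^ Fintype.card n / (weightedForm Q B (c * τ)).det)) := by
  rw [blForm_gaussianOfMass hm hτ, lintegral_exp_neg_of_posDef hA,
    ENNReal.ofReal_mul (gaussianFactor_pos hm hτ).le]

lemma weightedForm_posDef_of_blForm_ne_top (hQ : Q.PosSemidef) (hc : 0 ≤ c) (hm : ∀ i, 0 < m i)
    (hτ : ∀ i, 0 < τ i) (hfin : blForm Q B c (fun i ↦ gaussianOfMass (m i) (τ i)) ≠ ⊤) :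
    (weightedForm Q B (c * τ)).PosDef := by
  classical
  rw [blForm_gaussianOfMass hm hτ] at hfin
  refine posDef_of_lintegral_exp_neg_ne_top
    (weightedForm_posSemidef hQ (mul_nonneg hc fun i ↦ (hτ i).le)) ?_
  exact (ENNReal.lt_top_of_mul_ne_top_right hfin
    (ENNReal.ofReal_pos.2 (gaussianFactor_pos hm hτ)).ne').ne

lemma prod_mul_gaussianOfMass_rpow_mul_gaussianFactor (hm : ∀ i, 0 < m i) (hσ : ∀ i, 0 < σ i)
    {a : ι → ℝ} (ha : ∀ i, 0 < a i) (t : ι → ℝ) :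
    (∏ i, (a i * gaussianOfMass (m i) (σ i) (t i)) ^ c i) * gaussianFactor c m σ =
      gaussianFactor c m (σ * a) ^ 2 * rexp (-∑ i, (c * σ) i * t i ^ 2) := by
  rw [gaussianFactor, gaussianFactor, ← Finset.prod_pow, ← Finset.sum_neg_distrib, exp_sum,
    ← Finset.prod_mul_distrib, ← Finset.prod_mul_distrib]
  refine Finset.prod_congr rfl fun i _ ↦ ?_
  have hsq : a i * (m i * √(σ i / π)) ^ 2 = (m i * √((σ * a) i / π)) ^ 2 := by
    rw [mul_pow, mul_pow, sq_sqrt (div_pos (hσ i) pi_pos).le, Pi.mul_apply,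
      sq_sqrt (div_pos (mul_pos (hσ i) (ha i)) pi_pos).le]
    ring
  have hfactor : 0 < m i * √(σ i / π) := mul_pos (hm i) (sqrt_pos.2 (div_pos (hσ i) pi_pos))
  calc (a i * gaussianOfMass (m i) (σ i) (t i)) ^ c i * (m i * √(σ i / π)) ^ c i
      = (a i * (m i * √(σ i / π)) ^ 2 * rexp (-σ i * t i ^ 2)) ^ c i := by
        rw [← mul_rpow (mul_pos (ha i) (gaussianOfMass_pos (hm i) (hσ i) _)).le hfactor.le,
          gaussianOfMass]
        ring_nf
    _ = ((m i * √((σ * a) i / π)) ^ c i) ^ 2 * rexp (-((c * σ) i * t i ^ 2)) := by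
        rw [hsq, mul_rpow (sq_nonneg _) (exp_pos _).le, ← exp_mul,
          rpow_pow_comm (mul_nonneg (hm i).le (sqrt_nonneg _)), Pi.mul_apply c]
        ring_nf

lemma integrand_mul_gaussianFactor_le [DecidableEq n] (hQ : Q.PosSemidef) (hc : 0 ≤ c)
    (hm : ∀ i, 0 < m i) (hσ : ∀ i, 0 < σ i) (hA : (weightedForm Q B (c * σ)).PosDef)
    {a t : ι → ℝ} (ha : ∀ i, 0 < a i) {x X : n → ℝ} (hX : X = Q *ᵥ x + Bᵀ *ᵥ (c * σ * t)) :
    (∏ i, (a i * gaussianOfMass (m i) (σ i) (t i)) ^ c i) * rexp (-(x ⬝ᵥ Q *ᵥ x)) *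
        gaussianFactor c m σ ≤
      gaussianFactor c m (σ * a) ^ 2 * rexp (-(X ⬝ᵥ (weightedForm Q B (c * σ))⁻¹ *ᵥ X)) := by
  set A := weightedForm Q B (c * σ)
  have hAinv : A *ᵥ A⁻¹ *ᵥ X = X := by
    rw [mulVec_mulVec, mul_nonsing_inv _ hA.det_pos.ne'.isUnit, one_mulVec]
  have hquad : X ⬝ᵥ A⁻¹ *ᵥ X ≤ x ⬝ᵥ Q *ᵥ x + ∑ i, (c * σ) i * t i ^ 2 := by
    have := dotProduct_weightedForm_le hQ (mul_nonneg hc fun i ↦ (hσ i).le) (hAinv.trans hX)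
    rwa [hAinv, dotProduct_comm] at this
  rw [mul_right_comm, prod_mul_gaussianOfMass_rpow_mul_gaussianFactor hm hσ ha, mul_assoc,
    ← exp_add, add_comm, ← neg_add]
  gcongr

lemma blForm_mul_gaussianFactor_le_of_transport [DecidableEq n] {f T T' : ι → ℝ → ℝ} {K : ℝ}
    (hQ : Q.PosSemidef) (hc : 0 ≤ c) (hm : ∀ i, 0 < m i) (hσ : ∀ i, 0 < σ i)
    (hT : ∀ i x, HasDerivAt (T i) (T' i x) x) (hT' : ∀ i x, 0 < T' i x)
    (hf : ∀ i x, f i x = T' i x * gaussianOfMass (m i) (σ i) (T i x))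
    (hA : ∀ τ : ι → ℝ, (∀ i, 0 < τ i) → (weightedForm Q B (c * τ)).PosDef)
    (hK : ∀ τ : ι → ℝ, (∀ i, 0 < τ i) →
      gaussianFactor c m τ ^ 2 ≤ K * (weightedForm Q B (c * τ)).det) :
    blForm Q B c f * ENNReal.ofReal (gaussianFactor c m σ) ≤
      ENNReal.ofReal K * ENNReal.ofReal √(π ^ Fintype.card n * (weightedForm Q B (c * σ)).det) := by
  set A := weightedForm Q B (c * σ)
  let a (x : n → ℝ) (i : ι) : ℝ := T' i ((B *ᵥ x) i)
  let Θ (x : n → ℝ) : n → ℝ := Q *ᵥ x + Bᵀ *ᵥ (c * σ * fun i ↦ T i ((B *ᵥ x) i))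
  have hτ (x : n → ℝ) (i : ι) : 0 < (σ * a x) i := mul_pos (hσ i) (hT' i _)
  have hΘ (x : n → ℝ) :
      HasFDerivAt Θ (toLin' (weightedForm Q B (c * (σ * a x)))).toContinuousLinearMap x := by
    rw [← mul_assoc]
    exact hasFDerivAt_mulVec_add_transpose_mulVec Q fun i ↦ (hT i _).const_mul ((c * σ) i)
  have hpoint (x : n → ℝ) : ENNReal.ofReal ((∏ i, f i ((B *ᵥ x) i) ^ c i) *
        rexp (-(x ⬝ᵥ Q *ᵥ x))) * ENNReal.ofReal (gaussianFactor c m σ) ≤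
      ENNReal.ofReal K * (ENNReal.ofReal (weightedForm Q B (c * (σ * a x))).det *
        ENNReal.ofReal (rexp (-(Θ x ⬝ᵥ A⁻¹ *ᵥ Θ x)))) := by
    rw [← mul_assoc, ← ENNReal.ofReal_mul' (hA _ (hτ x)).det_pos.le,
      ← ENNReal.ofReal_mul' (exp_pos _).le, ← ENNReal.ofReal_mul' (gaussianFactor_pos hm hσ).le]
    simp only [hf]
    exact ENNReal.ofReal_le_ofReal ((integrand_mul_gaussianFactor_le hQ hc hm hσ (hA σ hσ)
      (fun i ↦ hT' i _) rfl).trans (by gcongr; exact hK _ (hτ x)))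
  calc blForm Q B c f * ENNReal.ofReal (gaussianFactor c m σ)
      ≤ ∫⁻ x, ENNReal.ofReal K * (ENNReal.ofReal (weightedForm Q B (c * (σ * a x))).det *
          ENNReal.ofReal (rexp (-(Θ x ⬝ᵥ A⁻¹ *ᵥ Θ x)))) := by
        rw [blForm, ← lintegral_mul_const' _ _ ENNReal.ofReal_ne_top]
        exact lintegral_mono hpoint
    _ ≤ ENNReal.ofReal K * ∫⁻ x : n → ℝ, ENNReal.ofReal (rexp (-(x ⬝ᵥ A⁻¹ *ᵥ x))) := by
        rw [lintegral_const_mul' _ _ ENNReal.ofReal_ne_top]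
        refine mul_le_mul_right ?_ _
        exact lintegral_det_mul_comp_le hΘ (fun x ↦ hA _ (hτ x))
          fun x ↦ ENNReal.ofReal (rexp (-(x ⬝ᵥ A⁻¹ *ᵥ x)))
    _ = _ := by
        rw [lintegral_exp_neg_of_posDef (hA σ hσ).inv, det_nonsing_inv, Ring.inverse_eq_inv',
          div_inv_eq_mul]

lemma gaussianFactor_sq_le [DecidableEq n] {S : ℝ} (hm : ∀ i, 0 < m i) (hτ : ∀ i, 0 < τ i)
    (hA : (weightedForm Q B (c * τ)).PosDef) (hS0 : 0 ≤ S)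
    (hS : blForm Q B c (fun i ↦ gaussianOfMass (m i) (τ i)) ≤ ENNReal.ofReal S) :
    gaussianFactor c m τ ^ 2 ≤ S ^ 2 / π ^ Fintype.card n * (weightedForm Q B (c * τ)).det := by
  have hdet := hA.det_pos
  rw [blForm_gaussianOfMass_of_posDef hm hτ hA, ENNReal.ofReal_le_ofReal_iff hS0] at hS
  have hsq := pow_le_pow_left₀ (mul_nonneg (gaussianFactor_pos hm hτ).le (sqrt_nonneg _)) hS 2
  rwa [mul_pow, sq_sqrt (by positivity), ← mul_div_assoc, div_le_iff₀ hdet,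
    ← le_div_iff₀ (by positivity), ← div_mul_eq_mul_div] at hsq

lemma blForm_mul_blForm_gaussianOfMass_le {f : ι → ℝ → ℝ} {S : ℝ≥0∞}
    (hQ : Q.PosSemidef) (hc : 0 ≤ c) (hm : ∀ i, 0 < m i) (hσ : ∀ i, 0 < σ i)
    (hfc : ∀ i, Continuous (f i)) (hfpos : ∀ i x, 0 < f i x) (hfint : ∀ i, Integrable (f i))
    (hfm : ∀ i, ∫ x, f i x = m i)
    (hS : ∀ τ : ι → ℝ, (∀ i, 0 < τ i) → blForm Q B c (fun i ↦ gaussianOfMass (m i) (τ i)) ≤ S) :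
    blForm Q B c f * blForm Q B c (fun i ↦ gaussianOfMass (m i) (σ i)) ≤ S ^ 2 := by
  classical
  rcases eq_or_ne S ⊤ with rfl | hS_top
  · simp
  obtain ⟨S, hS0, rfl⟩ : ∃ S' : ℝ, 0 ≤ S' ∧ S = ENNReal.ofReal S' :=
    ⟨S.toReal, ENNReal.toReal_nonneg, (ENNReal.ofReal_toReal hS_top).symm⟩
  have hA (τ : ι → ℝ) (hτ : ∀ i, 0 < τ i) : (weightedForm Q B (c * τ)).PosDef :=
    weightedForm_posDef_of_blForm_ne_top hQ hc hm hτ ((hS τ hτ).trans_lt ENNReal.ofReal_lt_top).ne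
  choose T T' hT hT' hfT using fun i ↦ exists_monotone_transport (hfc i) (hfpos i) (hfint i)
    continuous_gaussianOfMass (gaussianOfMass_pos (hm i) (hσ i)) (integrable_gaussianOfMass (hσ i))
    ((hfm i).trans (integral_gaussianOfMass (hσ i)).symm)
  have hdet := (hA σ hσ).det_pos
  rw [blForm_gaussianOfMass_of_posDef hm hσ (hA σ hσ),
    ENNReal.ofReal_mul (gaussianFactor_pos hm hσ).le, ← mul_assoc]
  grw [blForm_mul_gaussianFactor_le_of_transport hQ hc hm hσ hT hT' hfT hA
    fun τ hτ ↦ gaussianFactor_sq_le hm hτ (hA τ hτ) hS0 (hS τ hτ)]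
  rw [← ENNReal.ofReal_mul (by positivity), ← ENNReal.ofReal_mul (by positivity), mul_assoc,
    ← sqrt_mul (by positivity), mul_assoc, mul_div_cancel₀ _ hdet.ne',
    sqrt_mul_self (by positivity), div_mul_cancel₀ _ (by positivity), ENNReal.ofReal_pow hS0]

lemma blForm_gaussianOfMass_pos (hm : ∀ i, 0 < m i) (hσ : ∀ i, 0 < σ i) :
    0 < blForm Q B c (fun i ↦ gaussianOfMass (m i) (σ i)) := by
  rw [blForm, lintegral_pos_iff_support (by fun_prop)]
  have hsupp : (Function.support fun x : n → ℝ ↦ ENNReal.ofReal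
      ((∏ i, gaussianOfMass (m i) (σ i) ((B *ᵥ x) i) ^ c i) * rexp (-(x ⬝ᵥ Q *ᵥ x)))) =
      Set.univ := Set.eq_univ_of_forall fun x ↦ (ENNReal.ofReal_pos.2 <| mul_pos
        (Finset.prod_pos fun i _ ↦ rpow_pos_of_pos (gaussianOfMass_pos (hm i) (hσ i) _) _)
        (exp_pos _)).ne'
  rw [hsupp]
  exact isOpen_univ.measure_pos volume Set.univ_nonempty

lemma blForm_le_of_continuous {f : ι → ℝ → ℝ} {C : ℝ≥0∞}
    (hQ : Q.PosSemidef) (hc : 0 ≤ c) (hm : ∀ i, 0 < m i)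
    (hfc : ∀ i, Continuous (f i)) (hfpos : ∀ i x, 0 < f i x) (hfint : ∀ i, Integrable (f i))
    (hfm : ∀ i, ∫ x, f i x = m i)
    (hC : ∀ τ : ι → ℝ, (∀ i, 0 < τ i) → blForm Q B c (fun i ↦ gaussianOfMass (m i) (τ i)) ≤ C) :
    blForm Q B c f ≤ C := by
  set S : ℝ≥0∞ := ⨆ (τ : ι → ℝ) (_ : ∀ i, 0 < τ i),
    blForm Q B c (fun i ↦ gaussianOfMass (m i) (τ i))
  have hle_S (τ : ι → ℝ) (hτ : ∀ i, 0 < τ i) :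
      blForm Q B c (fun i ↦ gaussianOfMass (m i) (τ i)) ≤ S :=
    le_iSup₂_of_le τ hτ le_rfl
  have hS_le : S ≤ C := iSup₂_le hC
  rcases eq_or_ne S ⊤ with hS | hS
  · exact le_top.trans (hS.symm.le.trans hS_le)
  have hS0 : S ≠ 0 := ((blForm_gaussianOfMass_pos hm fun _ ↦ one_pos).trans_le
    (hle_S (fun _ ↦ 1) fun _ ↦ one_pos)).ne'
  have hmul : blForm Q B c f * S ≤ S * S := by
    rw [← sq]
    simp only [S, ENNReal.mul_iSup]
    exact iSup₂_le fun σ hσ ↦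
      blForm_mul_blForm_gaussianOfMass_le hQ hc hm hσ hfc hfpos hfint hfm hle_S
  exact ((ENNReal.mul_le_mul_iff_left hS0 hS).1 hmul).trans hS_le

end BrascampLieb

section Approximation

lemma exists_continuous_pos_integral_sub_le {f : ℝ → ℝ} (hf : Integrable f) (hf0 : 0 ≤ f) {δ : ℝ}
    (hδ : 0 < δ) :
    ∃ g : ℝ → ℝ, Continuous g ∧ (∀ x, 0 < g x) ∧ Integrable g ∧ ∫ x, |g x - f x| ≤ δ := by
  obtain ⟨g, -, hfg, hgc, hg⟩ := hf.exists_hasCompactSupport_integral_sub_le (half_pos hδ)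
  have hdiff : Integrable fun x ↦ f x - g x := hf.sub hg
  have hφ := integrable_gaussianOfMass (m := δ / 2) one_pos
  have hφ_pos := gaussianOfMass_pos (half_pos hδ) one_pos
  refine ⟨fun x ↦ |g x| + gaussianOfMass (δ / 2) 1 x, by fun_prop,
    fun x ↦ add_pos_of_nonneg_of_pos (abs_nonneg _) (hφ_pos x), hg.abs.add hφ, ?_⟩
  calc ∫ x, |(|g x| + gaussianOfMass (δ / 2) 1 x) - f x|
      ≤ ∫ x, (‖f x - g x‖ + gaussianOfMass (δ / 2) 1 x) := by
        refine integral_mono ((hg.abs.add hφ).sub hf).abs (hdiff.norm.add hφ) fun x ↦ ?_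
        have habs := abs_abs_sub_abs_le_abs_sub (g x) (f x)
        rw [abs_of_nonneg (hf0 x), abs_sub_comm (g x)] at habs
        calc |(|g x| + gaussianOfMass (δ / 2) 1 x) - f x|
            = |(|g x| - f x) + gaussianOfMass (δ / 2) 1 x| := by rw [add_sub_right_comm]
          _ ≤ |(|g x| - f x)| + |gaussianOfMass (δ / 2) 1 x| := abs_add_le _ _
          _ ≤ ‖f x - g x‖ + gaussianOfMass (δ / 2) 1 x := by
            rw [abs_of_pos (hφ_pos x)]
            gcongr
            exact habs
    _ ≤ δ := by
        rw [integral_add hdiff.norm hφ, integral_gaussianOfMass one_pos]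
        linarith

lemma exists_continuous_pos_integral_eq {f : ℝ → ℝ} (hf : Integrable f) (hf0 : 0 ≤ f)
    (hfpos : 0 < ∫ x, f x) {δ : ℝ} (hδ : 0 < δ) :
    ∃ g : ℝ → ℝ, Continuous g ∧ (∀ x, 0 < g x) ∧ Integrable g ∧ ∫ x, g x = ∫ x, f x ∧
      ∫ x, |g x - f x| ≤ δ := by
  obtain ⟨g, hgc, hgpos, hg, hgf⟩ := exists_continuous_pos_integral_sub_le hf hf0 (half_pos hδ)
  set M := ∫ x, f x
  have hI : 0 < ∫ x, g x := integral_pos_of_integrable_nonneg_nonzero (x := 0) hgc hg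
    (fun x ↦ (hgpos x).le) (hgpos 0).ne'
  set I := ∫ x, g x
  -- Rescaling `g` to the integral of `f` costs `|M - I|`, at most the distance already paid.
  have hMI : |M - I| ≤ δ / 2 := by
    rw [abs_sub_comm, ← integral_sub hg hf]
    exact (abs_integral_le_integral_abs).trans hgf
  have hscale : ∫ x, |M / I * g x - g x| = |M - I| := by
    have (x : ℝ) : |M / I * g x - g x| = |M / I - 1| * g x := by
      rw [← sub_one_mul, abs_mul, abs_of_pos (hgpos x)]
    simp only [this]
    rw [integral_const_mul, div_sub_one hI.ne', abs_div, abs_of_pos hI, div_mul_cancel₀ _ hI.ne']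
  have hint_scale : Integrable fun x ↦ M / I * g x - g x := (hg.const_mul _).sub hg
  have hint_sub : Integrable fun x ↦ g x - f x := hg.sub hf
  refine ⟨fun x ↦ M / I * g x, by fun_prop, fun x ↦ mul_pos (div_pos hfpos hI) (hgpos x),
    hg.const_mul _, by rw [integral_const_mul, div_mul_cancel₀ _ hI.ne'], ?_⟩
  calc ∫ x, |M / I * g x - f x|
      ≤ ∫ x, (|M / I * g x - g x| + |g x - f x|) :=
        integral_mono ((hg.const_mul _).sub hf).abs
          (hint_scale.abs.add hint_sub.abs) fun x ↦ abs_sub_le _ _ _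
    _ ≤ δ := by
        rw [integral_add hint_scale.abs hint_sub.abs, hscale]
        linarith

lemma exists_seq_continuous_pos_tendsto_ae {f : ℝ → ℝ} (hf : Integrable f) (hf0 : 0 ≤ f)
    (hfpos : 0 < ∫ x, f x) :
    ∃ g : ℕ → ℝ → ℝ, (∀ k, Continuous (g k) ∧ (∀ x, 0 < g k x) ∧ Integrable (g k) ∧
        ∫ x, g k x = ∫ x, f x) ∧
      ∀ᵐ x, Tendsto (g · x) atTop (𝓝 (f x)) := by
  choose g hgc hgpos hg hgm hgf using fun k : ℕ ↦
    exists_continuous_pos_integral_eq hf hf0 hfpos (Nat.one_div_pos_of_nat (α := ℝ) (n := k))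
  have hL1 : Tendsto (fun k ↦ eLpNorm (g k - f) 1 volume) atTop (𝓝 0) := by
    have hnorm (k : ℕ) : eLpNorm (g k - f) 1 volume = ENNReal.ofReal (∫ x, |g k x - f x|) :=
      (eLpNorm_one_eq_lintegral_enorm).trans
        (ofReal_integral_norm_eq_lintegral_enorm ((hg k).sub hf)).symm
    simp only [hnorm]
    rw [← ENNReal.ofReal_zero]
    exact ENNReal.tendsto_ofReal (squeeze_zero (fun _ ↦ integral_nonneg fun _ ↦ abs_nonneg _) hgf
      tendsto_one_div_add_atTop_nhds_zero_nat)
  obtain ⟨ns, -, hns⟩ := (tendstoInMeasure_of_tendsto_eLpNorm one_ne_zero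
    (fun k ↦ (hg k).aestronglyMeasurable) hf.aestronglyMeasurable hL1).exists_seq_tendsto_ae
  exact ⟨fun k ↦ g (ns k), fun k ↦ ⟨hgc _, hgpos _, hg _, hgm _⟩, hns⟩

lemma quasiMeasurePreserving_of_surjective {E F : Type*} [NormedAddCommGroup E] [NormedSpace ℝ E]
    [FiniteDimensional ℝ E] [MeasurableSpace E] [BorelSpace E] [NormedAddCommGroup F]
    [NormedSpace ℝ F] [MeasurableSpace F] [BorelSpace F] {L : E →ₗ[ℝ] F}
    (μ : Measure E) (ν : Measure F) [μ.IsAddHaarMeasure] [ν.IsAddHaarMeasure]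
    (hL : Function.Surjective L) : Measure.QuasiMeasurePreserving L μ ν := by
  have := FiniteDimensional.proper_real E
  obtain ⟨c, -, hc⟩ := L.exists_map_addHaar_eq_smul_addHaar μ ν hL
  exact ⟨(L.continuous_of_finiteDimensional).measurable, hc ▸ Measure.smul_absolutelyContinuous⟩

end Approximation

section Lieb

variable {n ι : Type*} [Fintype n] {Q : Matrix n n ℝ} {B : Matrix ι n ℝ} {c m : ι → ℝ}

lemma quasiMeasurePreserving_mulVec_apply {i : ι} (hi : B i ≠ 0) :
    Measure.QuasiMeasurePreserving fun x : n → ℝ ↦ (B *ᵥ x) i := by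
  refine quasiMeasurePreserving_of_surjective (L := LinearMap.proj i ∘ₗ B.mulVecLin) volume volume
    (LinearMap.surjective fun h ↦ hi (funext fun j ↦ ?_))
  classical
  simpa using LinearMap.congr_fun h (Pi.single j 1)

variable [Fintype ι]

lemma blForm_le_of_tendsto {f : ι → ℝ → ℝ} {g : ι → ℕ → ℝ → ℝ} {C : ℝ≥0∞} (hc : 0 ≤ c)
    (hB : ∀ i, 0 < c i → B i ≠ 0) (hg : ∀ i k, Measurable (g i k))
    (hgf : ∀ i, ∀ᵐ x, Tendsto (g i · x) atTop (𝓝 (f i x)))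
    (hC : ∀ k, blForm Q B c (g · k) ≤ C) : blForm Q B c f ≤ C := by
  have hfactor (i : ι) : ∀ᵐ x : n → ℝ,
      Tendsto (fun k ↦ g i k ((B *ᵥ x) i) ^ c i) atTop (𝓝 (f i ((B *ᵥ x) i) ^ c i)) := by
    rcases (hc i).eq_or_lt with hci | hci
    · simp [← hci]
    · filter_upwards [(quasiMeasurePreserving_mulVec_apply (hB i hci)).ae (hgf i)] with x hx
      exact hx.rpow_const (Or.inr hci.le)
  have hlim : ∀ᵐ x : n → ℝ, Tendsto (fun k ↦ ENNReal.ofReal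
      ((∏ i, g i k ((B *ᵥ x) i) ^ c i) * rexp (-(x ⬝ᵥ Q *ᵥ x)))) atTop
      (𝓝 (ENNReal.ofReal ((∏ i, f i ((B *ᵥ x) i) ^ c i) * rexp (-(x ⬝ᵥ Q *ᵥ x))))) := by
    filter_upwards [ae_all_iff.2 hfactor] with x hx
    exact ENNReal.tendsto_ofReal ((tendsto_finsetProd _ fun i _ ↦ hx i).mul_const _)
  calc blForm Q B c f
      = ∫⁻ x : n → ℝ, liminf (fun k ↦ ENNReal.ofReal
          ((∏ i, g i k ((B *ᵥ x) i) ^ c i) * rexp (-(x ⬝ᵥ Q *ᵥ x)))) atTop :=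
        lintegral_congr_ae (hlim.mono fun x hx ↦ hx.liminf_eq.symm)
    _ ≤ liminf (fun k ↦ blForm Q B c (g · k)) atTop := lintegral_liminf_le fun k ↦ by fun_prop
    _ ≤ C := liminf_le_of_le (by isBoundedDefault) fun b hb ↦
        let ⟨k, hk⟩ := hb.exists; hk.trans (hC k)

lemma blForm_mul_left {a : ι → ℝ} (ha : 0 ≤ a) {f : ι → ℝ → ℝ} (hf : ∀ i, 0 ≤ f i) :
    blForm Q B c (fun i t ↦ a i * f i t) = ENNReal.ofReal (∏ i, a i ^ c i) * blForm Q B c f := by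
  rw [blForm, blForm, ← lintegral_const_mul' _ _ ENNReal.ofReal_ne_top]
  refine lintegral_congr fun x ↦ ?_
  rw [← ENNReal.ofReal_mul (Finset.prod_nonneg fun i _ ↦ rpow_nonneg (ha i) _), ← mul_assoc,
    ← Finset.prod_mul_distrib]
  simp only [mul_rpow (ha _) (hf _ _)]

lemma blForm_congr {f g : ι → ℝ → ℝ} (h : ∀ i x, f i ((B *ᵥ x) i) = g i ((B *ᵥ x) i)) :
    blForm Q B c f = blForm Q B c g := by
  simp only [blForm, h]

lemma row_ne_zero_of_blForm_le {C : ℝ≥0∞} (hC_top : C ≠ ⊤) (hm : ∀ i, 0 < m i)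
    (hC : ∀ τ : ι → ℝ, (∀ i, 0 < τ i) → blForm Q B c (fun i ↦ gaussianOfMass (m i) (τ i)) ≤ C)
    {i : ι} (hi : 0 < c i) : B i ≠ 0 := by
  classical
  intro hBi
  -- Sharpening only the `i`-th Gaussian rescales the form by a power of its exponent.
  have hscale (t : ℝ) (ht : 0 < t) : ENNReal.ofReal (√t ^ c i) *
      blForm Q B c (fun j ↦ gaussianOfMass (m j) 1) ≤ C := by
    have hτ (j : ι) : 0 < Function.update (1 : ι → ℝ) i t j := by
      rcases eq_or_ne j i with rfl | hj <;> simp [*]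
    have hprod : ∏ j, √(Function.update (1 : ι → ℝ) i t j) ^ c j = √t ^ c i := by
      rw [Finset.prod_eq_single i (fun j _ hj ↦ by simp [hj]) (by simp), Function.update_self]
    rw [← hprod, ← blForm_mul_left (fun _ ↦ sqrt_nonneg _)
      fun j x ↦ (gaussianOfMass_pos (hm j) one_pos x).le]
    refine (blForm_congr fun j x ↦ ?_).trans_le (hC _ hτ)
    rcases eq_or_ne j i with rfl | hj
    · have hBx : (B *ᵥ x) j = 0 := by simp [mulVec, hBi]
      simp only [gaussianOfMass, hBx, Function.update_self, sqrt_div ht.le, sqrt_div zero_le_one,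
        sqrt_one]
      ring_nf
    · simp [hj]
  have hpos : 0 < blForm Q B c (fun j ↦ gaussianOfMass (m j) 1) :=
    blForm_gaussianOfMass_pos hm fun _ ↦ one_pos
  have hblowup : Tendsto (fun t : ℝ ↦ ENNReal.ofReal (√t ^ c i) *
      blForm Q B c (fun j ↦ gaussianOfMass (m j) 1)) atTop (𝓝 ⊤) := by
    rw [← ENNReal.top_mul hpos.ne']
    exact ENNReal.Tendsto.mul_const (ENNReal.tendsto_ofReal_atTop.comp
      ((tendsto_rpow_atTop hi).comp tendsto_sqrt_atTop)) (Or.inl ENNReal.top_ne_zero)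
  exact hC_top (top_le_iff.1 (le_of_tendsto hblowup ((eventually_gt_atTop 0).mono hscale)))

/-- **Lieb's theorem** for rank-one maps. -/
theorem blForm_le_of_forall_gaussianOfMass_le {f : ι → ℝ → ℝ} {C : ℝ≥0∞} (hQ : Q.PosSemidef)
    (hc : 0 ≤ c) (hf : ∀ i, Integrable (f i)) (hf0 : ∀ i, 0 ≤ f i) (hm : ∀ i, 0 < m i)
    (hfm : ∀ i, ∫ x, f i x = m i)
    (hC : ∀ τ : ι → ℝ, (∀ i, 0 < τ i) → blForm Q B c (fun i ↦ gaussianOfMass (m i) (τ i)) ≤ C) :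
    blForm Q B c f ≤ C := by
  rcases eq_or_ne C ⊤ with rfl | hC_top
  · exact le_top
  choose g hg hgf using fun i ↦
    exists_seq_continuous_pos_tendsto_ae (hf i) (hf0 i) ((hfm i).symm ▸ hm i)
  exact blForm_le_of_tendsto hc (fun i hi ↦ row_ne_zero_of_blForm_le hC_top hm hC hi)
    (fun i k ↦ (hg i k).1.measurable) hgf fun k ↦ blForm_le_of_continuous hQ hc hm
      (fun i ↦ (hg i k).1) (fun i ↦ (hg i k).2.1) (fun i ↦ (hg i k).2.2.1)
      (fun i ↦ (hg i k).2.2.2.trans (hfm i)) hC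

end Lieb

section Duality

open scoped NNReal

variable {α : Type*} [MeasurableSpace α] {μ : Measure α} {u : α → ℝ≥0∞} {r : ℝ}

lemma eLpNorm_ofReal_eq {ε : Type*} [TopologicalSpace ε] [ENormedAddMonoid ε] {f : α → ε}
    (hr : 0 < r) : eLpNorm f (ENNReal.ofReal r) μ = (∫⁻ x, ‖f x‖ₑ ^ r ∂μ) ^ r⁻¹ := by
  rw [eLpNorm_eq_lintegral_rpow_enorm_toReal (ENNReal.ofReal_pos.2 hr).ne' ENNReal.ofReal_ne_top,
    ENNReal.toReal_ofReal hr.le, one_div]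

lemma eLpNorm_eq_one_iff_lintegral_rpow {f : α → ℝ} (hr : 0 < r) (hf0 : 0 ≤ f) :
    eLpNorm f (ENNReal.ofReal r) μ = 1 ↔ ∫⁻ x, ENNReal.ofReal (f x ^ r) ∂μ = 1 := by
  have hrpow (x : α) : ‖f x‖ₑ ^ r = ENNReal.ofReal (f x ^ r) := by
    rw [enorm_of_nonneg (hf0 x), ENNReal.ofReal_rpow_of_nonneg (hf0 x) hr.le]
  rw [eLpNorm_ofReal_eq hr,
    (ENNReal.rpow_left_injective (inv_ne_zero hr.ne')).eq_iff' (ENNReal.one_rpow _)]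
  simp only [hrpow]

lemma lintegral_le_of_forall_simpleFunc_le [SigmaFinite μ] {C : ℝ≥0∞}
    (hC : ∀ g : SimpleFunc α ℝ≥0, (∀ x, (g x : ℝ≥0∞) ≤ u x) → ∫⁻ x, g x ∂μ ≠ ⊤ →
      ∫⁻ x, g x ∂μ ≤ C) :
    ∫⁻ x, u x ∂μ ≤ C := by
  rw [lintegral_eq_nnreal]
  refine iSup₂_le fun g hg ↦ le_of_forall_lt fun L hL ↦ ?_
  rw [← SimpleFunc.lintegral_eq_lintegral] at hL
  obtain ⟨g', hg', hgL, hg_top⟩ := SimpleFunc.exists_lt_lintegral_simpleFunc_of_lt_lintegral hL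
  exact hg_top.trans_le (hC g' (fun x ↦ (ENNReal.coe_le_coe.2 (hg' x)).trans (hg x)) hgL.ne)

lemma lintegral_mul_rpow_le_eLpNorm (hr : 1 ≤ r) (hu : AEMeasurable u μ) {F : α → ℝ≥0∞}
    (hF : AEMeasurable F μ) (hF1 : ∫⁻ x, F x ∂μ = 1) :
    ∫⁻ x, u x * F x ^ (1 - r⁻¹) ∂μ ≤ eLpNorm u (ENNReal.ofReal r) μ := by
  have hr0 : 0 < r := one_pos.trans_le hr
  have hholder := ENNReal.lintegral_mul_norm_pow_le (hu.pow_const r) hF (inv_nonneg.2 hr0.le)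
    (sub_nonneg.2 (inv_le_one_of_one_le₀ hr)) (add_sub_cancel _ _)
  simpa only [ENNReal.rpow_rpow_inv hr0.ne', hF1, ENNReal.one_rpow, mul_one, eLpNorm_ofReal_eq hr0,
    enorm_eq_self] using hholder

lemma eLpNorm_le_of_forall_lintegral_mul_rpow_le [SigmaFinite μ] (hr : 1 ≤ r) {C : ℝ≥0∞}
    (hC : ∀ F : α → ℝ≥0, Measurable F → ∫⁻ x, F x ∂μ = 1 →
      ∫⁻ x, u x * (F x : ℝ≥0∞) ^ (1 - r⁻¹) ∂μ ≤ C) :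
    eLpNorm u (ENNReal.ofReal r) μ ≤ C := by
  have hr0 : 0 < r := one_pos.trans_le hr
  have hr' : 0 ≤ 1 - r⁻¹ := sub_nonneg.2 (inv_le_one_of_one_le₀ hr)
  rw [eLpNorm_ofReal_eq hr0, ENNReal.rpow_inv_le_iff hr0]
  refine lintegral_le_of_forall_simpleFunc_le fun g hgu hg_top ↦ ?_
  simp only [enorm_eq_self] at hgu
  rcases eq_or_ne (∫⁻ x, g x ∂μ) 0 with hg0 | hg0
  · simp [hg0]
  -- Testing with `F = g / ∫ g` gives `(∫ g) ^ r⁻¹ ≤ C`.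
  obtain ⟨A, hA⟩ : ∃ A : ℝ≥0, ∫⁻ x, g x ∂μ = A := ⟨_, (ENNReal.coe_toNNReal hg_top).symm⟩
  rw [hA] at hg0 ⊢
  have hF1 : ∫⁻ x, (A⁻¹ * g x : ℝ≥0) ∂μ = 1 := by
    simp only [ENNReal.coe_mul]
    rw [lintegral_const_mul _ (by fun_prop), hA, ← ENNReal.coe_mul,
      inv_mul_cancel₀ (ENNReal.coe_ne_zero.1 hg0), ENNReal.coe_one]
  rw [← ENNReal.rpow_inv_le_iff hr0]
  calc (A : ℝ≥0∞) ^ r⁻¹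
      = (A⁻¹ : ℝ≥0) ^ (1 - r⁻¹) * ∫⁻ x, g x ∂μ := by
        rw [hA, ENNReal.coe_inv (ENNReal.coe_ne_zero.1 hg0), ENNReal.inv_rpow, ← ENNReal.rpow_neg,
          neg_sub, ENNReal.rpow_sub _ _ hg0 ENNReal.coe_ne_top, ENNReal.rpow_one,
          ENNReal.div_mul_cancel hg0 ENNReal.coe_ne_top]
    _ = ∫⁻ x, (A⁻¹ : ℝ≥0) ^ (1 - r⁻¹) * (g x : ℝ≥0∞) ∂μ :=
        (lintegral_const_mul _ (by fun_prop)).symm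
    _ ≤ ∫⁻ x, u x * ((A⁻¹ * g x : ℝ≥0) : ℝ≥0∞) ^ (1 - r⁻¹) ∂μ := by
        refine lintegral_mono fun x ↦ ?_
        have hg_le : (g x : ℝ≥0∞) ≤ u x * (g x : ℝ≥0∞) ^ (1 - r⁻¹) := by
          calc (g x : ℝ≥0∞) = (g x : ℝ≥0∞) ^ r⁻¹ * (g x : ℝ≥0∞) ^ (1 - r⁻¹) := by
                rw [← ENNReal.rpow_add_of_nonneg _ _ (inv_nonneg.2 hr0.le) hr', add_sub_cancel,
                  ENNReal.rpow_one]
            _ ≤ _ := by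
                gcongr
                exact (ENNReal.rpow_inv_le_iff hr0).2 (hgu x)
        rw [ENNReal.coe_mul, ENNReal.mul_rpow_of_nonneg _ _ hr', mul_left_comm]
        gcongr
    _ ≤ C := hC _ (by fun_prop) hF1

end Duality

section NormalizedLebesgue

instance : SigmaFinite normalizedLebesgueR :=
  inferInstanceAs (SigmaFinite (((2 * π) ^ (-(1 : ℝ) / 2)).toNNReal • volume))

lemma lintegral_ofReal_normalizedLebesgueR_eq_one_iff {f : ℝ → ℝ} (hf : Measurable f)
    (hf0 : 0 ≤ f) :
    ∫⁻ x, ENNReal.ofReal (f x) ∂normalizedLebesgueR = 1 ↔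
      Integrable f ∧ ∫ x, f x = √(2 * π) := by
  have hconst : (2 * π) ^ (-(1 : ℝ) / 2) = (√(2 * π))⁻¹ := by
    rw [sqrt_eq_rpow, ← rpow_neg (by positivity), neg_div]
  have hs : 0 < √(2 * π) := by positivity
  rw [normalizedLebesgueR, lintegral_smul_measure, smul_eq_mul, hconst,
    ENNReal.ofReal_inv_of_pos hs, ← ENNReal.div_eq_inv_mul,
    ENNReal.div_eq_one_iff (ENNReal.ofReal_pos.2 hs).ne'
      ENNReal.ofReal_ne_top]
  refine ⟨fun h ↦ ?_, fun ⟨hi, h⟩ ↦ ?_⟩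
  · have hi : Integrable f := ⟨hf.aestronglyMeasurable, by
      rw [hasFiniteIntegral_iff_ofReal (Eventually.of_forall hf0), h]; exact ENNReal.ofReal_lt_top⟩
    rw [integral_eq_lintegral_of_nonneg_ae (Eventually.of_forall hf0) hf.aestronglyMeasurable, h,
      ENNReal.toReal_ofReal hs.le]
    exact ⟨hi, rfl⟩
  · rw [← ofReal_integral_eq_lintegral_ofReal hi (Eventually.of_forall hf0), h]

end NormalizedLebesgue

section CenteredGaussian

/-- Centered Gaussian functions `x ↦ a * exp (-s * x ^ 2 / 2)` with `a, s > 0`, the trial functions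
of the Gaussian supremum. -/
def IsCenteredGaussian (f : ℝ → ℝ) : Prop :=
  ∃ a s : ℝ, 0 < a ∧ 0 < s ∧ ∀ x, f x = a * rexp (-s * x ^ 2 / 2)

variable {f : ℝ → ℝ}

lemma IsCenteredGaussian.continuous (hf : IsCenteredGaussian f) : Continuous f := by
  obtain ⟨a, s, -, -, hf⟩ := hf
  rw [funext hf]
  fun_prop

lemma IsCenteredGaussian.pos (hf : IsCenteredGaussian f) (x : ℝ) : 0 < f x := by
  obtain ⟨a, s, ha, -, hf⟩ := hf
  rw [hf]
  positivity

lemma IsCenteredGaussian.rpow (hf : IsCenteredGaussian f) {c : ℝ} (hc : 0 < c) :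
    IsCenteredGaussian fun x ↦ f x ^ c := by
  obtain ⟨a, s, ha, hs, hf⟩ := hf
  refine ⟨a ^ c, s * c, rpow_pos_of_pos ha c, mul_pos hs hc, fun x ↦ ?_⟩
  simp only [hf, mul_rpow ha.le (exp_pos _).le, ← exp_mul]
  ring_nf

lemma isCenteredGaussian_gaussianOfMass {m τ : ℝ} (hm : 0 < m) (hτ : 0 < τ) :
    IsCenteredGaussian (gaussianOfMass m τ) :=
  ⟨m * √(τ / π), 2 * τ, by positivity, by positivity, fun x ↦ by rw [gaussianOfMass]; ring_nf⟩

lemma lintegral_gaussianOfMass_normalizedLebesgueR {τ : ℝ} (hτ : 0 < τ) :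
    ∫⁻ x, ENNReal.ofReal (gaussianOfMass √(2 * π) τ x) ∂normalizedLebesgueR = 1 :=
  (lintegral_ofReal_normalizedLebesgueR_eq_one_iff continuous_gaussianOfMass.measurable
    fun x ↦ (gaussianOfMass_pos (by positivity) hτ x).le).2
    ⟨integrable_gaussianOfMass hτ, integral_gaussianOfMass hτ⟩

lemma eLpNorm_gaussianOfMass_rpow {p τ : ℝ} (hp : 0 < p) (hτ : 0 < τ) :
    eLpNorm (fun x ↦ gaussianOfMass √(2 * π) τ x ^ p⁻¹) (ENNReal.ofReal p) normalizedLebesgueR =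
      1 := by
  have hpos (x : ℝ) : 0 < gaussianOfMass √(2 * π) τ x := gaussianOfMass_pos (by positivity) hτ x
  rw [eLpNorm_eq_one_iff_lintegral_rpow hp fun x ↦ rpow_nonneg (hpos x).le _]
  simp only [rpow_inv_rpow (hpos _).le hp.ne']
  exact lintegral_gaussianOfMass_normalizedLebesgueR hτ

end CenteredGaussian

section Convolution

variable {B₁ B₂ : (Fin 2 → ℝ) →ₗ[ℝ] ℝ} {J : Matrix (Fin 2) (Fin 2) ℝ} {f g : ℝ → ℝ}

/-- The `[0, ∞]`-valued version of `gaussConv` for nonnegative functions. It is `∞`, whereas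
`gaussConv` is `0`, where the integral defining the latter diverges. -/
noncomputable def lgaussConv (B₁ B₂ : (Fin 2 → ℝ) →ₗ[ℝ] ℝ) (J : Matrix (Fin 2) (Fin 2) ℝ)
    (f g : ℝ → ℝ) (x : ℝ) : ℝ≥0∞ :=
  ∫⁻ y, ENNReal.ofReal (f (B₁ ![x, y]) * g (B₂ ![x, y]) *
    rexp (-(![x, y] ⬝ᵥ J *ᵥ ![x, y]))) ∂normalizedLebesgueR

/-- The functionals `B₁`, `B₂` and `(x, y) ↦ x` of the trilinear form dual to `gaussConv`. -/
noncomputable def dualMatrix (B₁ B₂ : (Fin 2 → ℝ) →ₗ[ℝ] ℝ) : Matrix (Fin 3) (Fin 2) ℝ :=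
  LinearMap.toMatrix' (LinearMap.pi ![B₁, B₂, LinearMap.proj 0])

lemma measurable_integrand (hf : Measurable f) (hg : Measurable g) :
    Measurable fun v : Fin 2 → ℝ ↦ f (B₁ v) * g (B₂ v) * rexp (-(v ⬝ᵥ J *ᵥ v)) := by
  have hB₁ := B₁.continuous_of_finiteDimensional
  have hB₂ := B₂.continuous_of_finiteDimensional
  fun_prop

@[fun_prop]
lemma measurable_vecCons : Measurable fun z : ℝ × ℝ ↦ ![z.1, z.2] :=
  (MeasurableEquiv.finTwoArrow (α := ℝ)).symm.measurable

lemma measurable_lgaussConv (hf : Measurable f) (hg : Measurable g) :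
    Measurable (lgaussConv B₁ B₂ J f g) :=
  ((measurable_integrand hf hg).comp measurable_vecCons).ennreal_ofReal.lintegral_prod_right'

lemma blForm_dualMatrix {c : Fin 3 → ℝ} {F : Fin 3 → ℝ → ℝ} :
    blForm J (dualMatrix B₁ B₂) c F = ∫⁻ v : Fin 2 → ℝ, ENNReal.ofReal
      (F 0 (B₁ v) ^ c 0 * F 1 (B₂ v) ^ c 1 * rexp (-(v ⬝ᵥ J *ᵥ v)) * F 2 (v 0) ^ c 2) := by
  rw [blForm]
  refine lintegral_congr fun v ↦ ?_
  simp only [dualMatrix, LinearMap.toMatrix'_mulVec, LinearMap.pi_apply, Fin.prod_univ_three]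
  exact congrArg ENNReal.ofReal (mul_right_comm _ _ _)

lemma lintegral_lgaussConv_mul {c : Fin 3 → ℝ} {F : Fin 3 → ℝ → ℝ}
    (hF : ∀ i, Measurable (F i)) (hF0 : ∀ i, 0 ≤ F i) :
    ∫⁻ x, lgaussConv B₁ B₂ J (F 0 · ^ c 0) (F 1 · ^ c 1) x * ENNReal.ofReal (F 2 x ^ c 2)
        ∂normalizedLebesgueR =
      ENNReal.ofReal ((2 * π) ^ (-(1 : ℝ) / 2)) ^ 2 * blForm J (dualMatrix B₁ B₂) c F := by
  set h : (Fin 2 → ℝ) → ℝ := fun v ↦ F 0 (B₁ v) ^ c 0 * F 1 (B₂ v) ^ c 1 * rexp (-(v ⬝ᵥ J *ᵥ v))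
  have hh : Measurable h := measurable_integrand ((hF 0).pow_const _) ((hF 1).pow_const _)
  have hh0 (v : Fin 2 → ℝ) : 0 ≤ h v :=
    mul_nonneg (mul_nonneg (rpow_nonneg (hF0 0 _) _) (rpow_nonneg (hF0 1 _) _)) (exp_pos _).le
  have hF2 := hF 2
  calc ∫⁻ x, lgaussConv B₁ B₂ J (F 0 · ^ c 0) (F 1 · ^ c 1) x * ENNReal.ofReal (F 2 x ^ c 2)
        ∂normalizedLebesgueR
      = ∫⁻ x, ∫⁻ y, ENNReal.ofReal (h ![x, y] * F 2 x ^ c 2) ∂normalizedLebesgueR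
          ∂normalizedLebesgueR := by
        simp only [lgaussConv, ← lintegral_mul_const' _ _ ENNReal.ofReal_ne_top,
          ENNReal.ofReal_mul (hh0 _), h]
    _ = ENNReal.ofReal ((2 * π) ^ (-(1 : ℝ) / 2)) ^ 2 *
          ∫⁻ x, ∫⁻ y, ENNReal.ofReal (h ![x, y] * F 2 x ^ c 2) := by
        simp only [normalizedLebesgueR, lintegral_smul_measure, smul_eq_mul,
          lintegral_const_mul' _ _ ENNReal.ofReal_ne_top, ← mul_assoc, sq]
    _ = ENNReal.ofReal ((2 * π) ^ (-(1 : ℝ) / 2)) ^ 2 *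
          ∫⁻ z : ℝ × ℝ, ENNReal.ofReal (h ![z.1, z.2] * F 2 z.1 ^ c 2) := by
        rw [Measure.volume_eq_prod, lintegral_prod _ (by fun_prop)]
    _ = ENNReal.ofReal ((2 * π) ^ (-(1 : ℝ) / 2)) ^ 2 * blForm J (dualMatrix B₁ B₂) c F := by
        rw [blForm_dualMatrix]
        congr 1
        exact (volume_preserving_finTwoArrow ℝ).symm.lintegral_comp_emb
          (MeasurableEquiv.finTwoArrow (α := ℝ)).symm.measurableEmbedding
          fun v ↦ ENNReal.ofReal (h v * F 2 (v 0) ^ c 2)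

end Convolution

section GaussianConvolution

variable {B₁ B₂ : (Fin 2 → ℝ) →ₗ[ℝ] ℝ} {J : Matrix (Fin 2) (Fin 2) ℝ} {f g : ℝ → ℝ} {p q r : ℝ}

lemma integrable_exp_neg_quadratic {α : ℝ} (hα : 0 < α) (β γ : ℝ) :
    Integrable fun y ↦ rexp (-(α * y ^ 2 + β * y + γ)) := by
  refine (((integrable_exp_neg_mul_sq hα).comp_add_right (β / (2 * α))).mul_const
    (rexp (β ^ 2 / (4 * α) - γ))).congr (Eventually.of_forall fun y ↦ ?_)
  simp only [← exp_add]
  congr 1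
  field

lemma map_vecCons (B : (Fin 2 → ℝ) →ₗ[ℝ] ℝ) (x y : ℝ) :
    B ![x, y] = x * B ![1, 0] + y * B ![0, 1] := by
  have hxy : ![x, y] = x • ![1, 0] + y • ![0, 1] := by simp
  rw [hxy, map_add, map_smul, map_smul, smul_eq_mul, smul_eq_mul]

lemma dotProduct_mulVec_vecCons (J : Matrix (Fin 2) (Fin 2) ℝ) (x y : ℝ) :
    ![x, y] ⬝ᵥ J *ᵥ ![x, y] = J 0 0 * x ^ 2 + (J 0 1 + J 1 0) * x * y + J 1 1 * y ^ 2 := by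
  simp only [mulVec, dotProduct, Fin.sum_univ_two, cons_val_zero, cons_val_one]
  ring

lemma IsCenteredGaussian.integrable_integrand (hf : IsCenteredGaussian f)
    (hg : IsCenteredGaussian g) (hJ : J.PosSemidef)
    (hne : B₁ ![0, 1] ≠ 0 ∨ B₂ ![0, 1] ≠ 0 ∨ J 1 1 ≠ 0) (x : ℝ) :
    Integrable (fun y ↦ f (B₁ ![x, y]) * g (B₂ ![x, y]) * rexp (-(![x, y] ⬝ᵥ J *ᵥ ![x, y])))
      normalizedLebesgueR := by
  obtain ⟨a, s, -, hs, hf⟩ := hf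
  obtain ⟨b, t, -, ht, hg⟩ := hg
  have hJ11 : 0 ≤ J 1 1 := hJ.diag_nonneg
  have hα : 0 < J 1 1 + s / 2 * B₁ ![0, 1] ^ 2 + t / 2 * B₂ ![0, 1] ^ 2 := by
    rcases hne with h | h | h <;> positivity
  refine Integrable.smul_measure ?_ ENNReal.ofReal_ne_top
  refine ((integrable_exp_neg_quadratic hα
    ((J 0 1 + J 1 0) * x + s * x * B₁ ![1, 0] * B₁ ![0, 1] + t * x * B₂ ![1, 0] * B₂ ![0, 1])
    ((J 0 0 + s / 2 * B₁ ![1, 0] ^ 2 + t / 2 * B₂ ![1, 0] ^ 2) * x ^ 2)).const_mul (a * b)).congr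
    (Eventually.of_forall fun y ↦ ?_)
  simp only [hf, hg, map_vecCons B₁ x y, map_vecCons B₂ x y, dotProduct_mulVec_vecCons]
  rw [mul_mul_mul_comm, mul_assoc (a * b), ← exp_add, ← exp_add]
  congr 2
  ring

lemma gaussConv_eq_zero (hJ : J.PosSemidef) (hB₁ : B₁ ![0, 1] = 0) (hB₂ : B₂ ![0, 1] = 0)
    (hJ11 : J 1 1 = 0) : gaussConv B₁ B₂ J f g = 0 := by
  have hJe : J *ᵥ ![0, 1] = 0 := (hJ.dotProduct_mulVec_zero_iff _).1 <| by
    simpa [dotProduct_mulVec_vecCons] using hJ11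
  have hJ01 : J 0 1 = 0 := by simpa [mulVec, dotProduct] using congrFun hJe 0
  have hJ10 : J 1 0 = 0 := by simpa [hJ01] using (hJ.isHermitian.apply 1 0).symm
  -- A nonzero constant in `y` is not integrable, so its integral takes the junk value `0`.
  funext x
  simp [gaussConv, map_vecCons _ x, hB₁, hB₂, hJ01, hJ10, hJ11, normalizedLebesgueR,
    integral_const, Measure.real]

lemma enorm_gaussConv_le (hf0 : 0 ≤ f) (hg0 : 0 ≤ g) (x : ℝ) :
    ‖gaussConv B₁ B₂ J f g x‖ₑ ≤ lgaussConv B₁ B₂ J f g x := by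
  refine (enorm_integral_le_lintegral_enorm _).trans_eq (lintegral_congr fun y ↦ ?_)
  exact enorm_of_nonneg (mul_nonneg (mul_nonneg (hf0 _) (hg0 _)) (exp_pos _).le)

lemma IsCenteredGaussian.enorm_gaussConv (hf : IsCenteredGaussian f) (hg : IsCenteredGaussian g)
    (hJ : J.PosSemidef) (hne : B₁ ![0, 1] ≠ 0 ∨ B₂ ![0, 1] ≠ 0 ∨ J 1 1 ≠ 0) (x : ℝ) :
    ‖gaussConv B₁ B₂ J f g x‖ₑ = lgaussConv B₁ B₂ J f g x := by
  have hnonneg (y : ℝ) :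
      0 ≤ f (B₁ ![x, y]) * g (B₂ ![x, y]) * rexp (-(![x, y] ⬝ᵥ J *ᵥ ![x, y])) :=
    (mul_pos (mul_pos (hf.pos _) (hg.pos _)) (exp_pos _)).le
  rw [lgaussConv, ← ofReal_integral_eq_lintegral_ofReal (hf.integrable_integrand hg hJ hne x)
    (Eventually.of_forall hnonneg)]
  exact enorm_of_nonneg (integral_nonneg hnonneg)

lemma mul_blForm_gaussianOfMass_le_eLpNorm_gaussConv (hp : 0 < p) (hq : 0 < q) (hr : 1 ≤ r)
    (hJ : J.PosSemidef) (hne : B₁ ![0, 1] ≠ 0 ∨ B₂ ![0, 1] ≠ 0 ∨ J 1 1 ≠ 0) {τ : Fin 3 → ℝ}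
    (hτ : ∀ i, 0 < τ i) :
    ENNReal.ofReal ((2 * π) ^ (-(1 : ℝ) / 2)) ^ 2 *
        blForm J (dualMatrix B₁ B₂) ![p⁻¹, q⁻¹, 1 - r⁻¹]
          (fun i ↦ gaussianOfMass √(2 * π) (τ i)) ≤
      eLpNorm (gaussConv B₁ B₂ J (fun x ↦ gaussianOfMass √(2 * π) (τ 0) x ^ p⁻¹)
        (fun x ↦ gaussianOfMass √(2 * π) (τ 1) x ^ q⁻¹)) (ENNReal.ofReal r)
        normalizedLebesgueR := by
  have hm : 0 < √(2 * π) := by positivity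
  have hG (i : Fin 3) : IsCenteredGaussian (gaussianOfMass √(2 * π) (τ i)) :=
    isCenteredGaussian_gaussianOfMass hm (hτ i)
  have hf := (hG 0).rpow (inv_pos.2 hp)
  have hg := (hG 1).rpow (inv_pos.2 hq)
  rw [← lintegral_lgaussConv_mul (fun i ↦ (hG i).continuous.measurable) fun i x ↦ ((hG i).pos x).le,
    ← eLpNorm_enorm (gaussConv _ _ _ _ _), funext (hf.enorm_gaussConv hg hJ hne)]
  simp only [← ENNReal.ofReal_rpow_of_pos ((hG 2).pos _)]
  exact lintegral_mul_rpow_le_eLpNorm hr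
    (measurable_lgaussConv hf.continuous.measurable hg.continuous.measurable).aemeasurable
    (hG 2).continuous.measurable.ennreal_ofReal.aemeasurable
    (lintegral_gaussianOfMass_normalizedLebesgueR (hτ 2))

lemma lintegral_lgaussConv_mul_le (hJ : J.PosSemidef) {c : Fin 3 → ℝ} (hc : 0 ≤ c) {R : ℝ≥0∞}
    (hR : ∀ τ : Fin 3 → ℝ, (∀ i, 0 < τ i) →
      ENNReal.ofReal ((2 * π) ^ (-(1 : ℝ) / 2)) ^ 2 *
        blForm J (dualMatrix B₁ B₂) c (fun i ↦ gaussianOfMass √(2 * π) (τ i)) ≤ R)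
    {F : Fin 3 → ℝ → ℝ} (hF : ∀ i, Measurable (F i)) (hF0 : ∀ i, 0 ≤ F i)
    (hF1 : ∀ i, ∫⁻ x, ENNReal.ofReal (F i x) ∂normalizedLebesgueR = 1) :
    ∫⁻ x, lgaussConv B₁ B₂ J (F 0 · ^ c 0) (F 1 · ^ c 1) x * ENNReal.ofReal (F 2 x ^ c 2)
      ∂normalizedLebesgueR ≤ R := by
  have hint (i : Fin 3) : Integrable (F i) ∧ ∫ x, F i x = √(2 * π) :=
    (lintegral_ofReal_normalizedLebesgueR_eq_one_iff (hF i) (hF0 i)).1 (hF1 i)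
  have hκ : ENNReal.ofReal ((2 * π) ^ (-(1 : ℝ) / 2)) ^ 2 ≠ 0 :=
    pow_ne_zero 2 (ENNReal.ofReal_pos.2 (by positivity)).ne'
  have hκ_top : ENNReal.ofReal ((2 * π) ^ (-(1 : ℝ) / 2)) ^ 2 ≠ ⊤ :=
    ENNReal.pow_ne_top ENNReal.ofReal_ne_top
  rw [lintegral_lgaussConv_mul hF hF0, ENNReal.mul_le_iff_le_inv hκ hκ_top]
  exact blForm_le_of_forall_gaussianOfMass_le hJ hc (fun i ↦ (hint i).1) hF0
    (fun _ ↦ by positivity) (fun i ↦ (hint i).2)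
    fun τ hτ ↦ (ENNReal.mul_le_iff_le_inv hκ hκ_top).1 (hR τ hτ)

lemma eLpNorm_gaussConv_le_of_blForm_gaussianOfMass_le (hp : 0 < p) (hq : 0 < q) (hr : 1 ≤ r)
    (hJ : J.PosSemidef) {R : ℝ≥0∞}
    (hR : ∀ τ : Fin 3 → ℝ, (∀ i, 0 < τ i) →
      ENNReal.ofReal ((2 * π) ^ (-(1 : ℝ) / 2)) ^ 2 *
        blForm J (dualMatrix B₁ B₂) ![p⁻¹, q⁻¹, 1 - r⁻¹]
          (fun i ↦ gaussianOfMass √(2 * π) (τ i)) ≤ R)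
    (hf : Measurable f) (hg : Measurable g) (hf0 : 0 ≤ f) (hg0 : 0 ≤ g)
    (hfp : eLpNorm f (ENNReal.ofReal p) normalizedLebesgueR = 1)
    (hgq : eLpNorm g (ENNReal.ofReal q) normalizedLebesgueR = 1) :
    eLpNorm (gaussConv B₁ B₂ J f g) (ENNReal.ofReal r) normalizedLebesgueR ≤ R := by
  refine (eLpNorm_mono_enorm fun x ↦ enorm_gaussConv_le hf0 hg0 x).trans <|
    eLpNorm_le_of_forall_lintegral_mul_rpow_le (u := lgaussConv B₁ B₂ J f g) hr fun h hh hh1 ↦ ?_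
  rw [eLpNorm_eq_one_iff_lintegral_rpow hp hf0] at hfp
  rw [eLpNorm_eq_one_iff_lintegral_rpow hq hg0] at hgq
  set F : Fin 3 → ℝ → ℝ := ![fun x ↦ f x ^ p, fun x ↦ g x ^ q, fun x ↦ h x]
  have hF : ∀ i, Measurable (F i) := by
    simpa [F, Fin.forall_fin_succ] using ⟨hf.pow_const p, hg.pow_const q, hh⟩
  have hF0 : ∀ i, 0 ≤ F i := by
    simpa [F, Fin.forall_fin_succ, Pi.le_def] using
      ⟨fun x ↦ rpow_nonneg (hf0 x) p, fun x ↦ rpow_nonneg (hg0 x) q⟩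
  have hF1 : ∀ i, ∫⁻ x, ENNReal.ofReal (F i x) ∂normalizedLebesgueR = 1 := by
    simpa [F, Fin.forall_fin_succ] using ⟨hfp, hgq, hh1⟩
  have hr' : 0 ≤ 1 - r⁻¹ := sub_nonneg.2 (inv_le_one_of_one_le₀ hr)
  have hc : 0 ≤ ![p⁻¹, q⁻¹, 1 - r⁻¹] := by
    simpa [Pi.le_def, Fin.forall_fin_succ] using ⟨hp.le, hq.le, sub_nonneg.1 hr'⟩
  have hF0_rpow : (fun x ↦ (f x ^ p) ^ p⁻¹) = f := funext fun x ↦ rpow_rpow_inv (hf0 x) hp.ne'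
  have hF1_rpow : (fun x ↦ (g x ^ q) ^ q⁻¹) = g := funext fun x ↦ rpow_rpow_inv (hg0 x) hq.ne'
  simpa [F, hF0_rpow, hF1_rpow, ← ENNReal.ofReal_rpow_of_nonneg, hr'] using
    lintegral_lgaussConv_mul_le hJ hc hR hF hF0 hF1

theorem eLpNorm_gaussConv_le (hp : 0 < p) (hq : 0 < q) (hr : 1 ≤ r) (hJ : J.PosSemidef)
    {R : ℝ≥0∞}
    (hR : ∀ f g : ℝ → ℝ, IsCenteredGaussian f → IsCenteredGaussian g →
      eLpNorm f (ENNReal.ofReal p) normalizedLebesgueR = 1 →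
      eLpNorm g (ENNReal.ofReal q) normalizedLebesgueR = 1 →
      eLpNorm (gaussConv B₁ B₂ J f g) (ENNReal.ofReal r) normalizedLebesgueR ≤ R)
    (hf : Measurable f) (hg : Measurable g) (hf0 : 0 ≤ f) (hg0 : 0 ≤ g)
    (hfp : eLpNorm f (ENNReal.ofReal p) normalizedLebesgueR = 1)
    (hgq : eLpNorm g (ENNReal.ofReal q) normalizedLebesgueR = 1) :
    eLpNorm (gaussConv B₁ B₂ J f g) (ENNReal.ofReal r) normalizedLebesgueR ≤ R := by
  by_cases hne : B₁ ![0, 1] ≠ 0 ∨ B₂ ![0, 1] ≠ 0 ∨ J 1 1 ≠ 0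
  · have hG {τ : ℝ} (hτ : 0 < τ) : IsCenteredGaussian (gaussianOfMass √(2 * π) τ) :=
      isCenteredGaussian_gaussianOfMass (by positivity) hτ
    exact eLpNorm_gaussConv_le_of_blForm_gaussianOfMass_le hp hq hr hJ (fun τ hτ ↦
      (mul_blForm_gaussianOfMass_le_eLpNorm_gaussConv hp hq hr hJ hne hτ).trans <|
        hR _ _ ((hG (hτ 0)).rpow (inv_pos.2 hp)) ((hG (hτ 1)).rpow (inv_pos.2 hq))
          (eLpNorm_gaussianOfMass_rpow hp (hτ 0)) (eLpNorm_gaussianOfMass_rpow hq (hτ 1)))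
      hf hg hf0 hg0 hfp hgq
  · push Not at hne
    obtain ⟨hB₁, hB₂, hJ11⟩ := hne
    simp [gaussConv_eq_zero hJ hB₁ hB₂ hJ11]

end GaussianConvolution

end LiebCorollary

open LiebCorollary

theorem lieb_corollary_gaussian_maximizers_general
    (p q r : ℝ) (hp : 0 < p) (hq : 0 < q) (hr : 1 ≤ r)
    (B₁ B₂ : (Fin 2 → ℝ) →ₗ[ℝ] ℝ)
    (J : Matrix (Fin 2) (Fin 2) ℝ) (hJ : J.PosSemidef) :
    sSup {c : ENNReal | ∃ f g : ℝ → ℝ,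
        Measurable f ∧ Measurable g ∧ (∀ x, 0 ≤ f x) ∧ (∀ x, 0 ≤ g x) ∧
        eLpNorm f (ENNReal.ofReal p) normalizedLebesgueR = 1 ∧
        eLpNorm g (ENNReal.ofReal q) normalizedLebesgueR = 1 ∧
        c = eLpNorm (gaussConv B₁ B₂ J f g) (ENNReal.ofReal r) normalizedLebesgueR}
    = sSup {c : ENNReal | ∃ f g : ℝ → ℝ,
        eLpNorm f (ENNReal.ofReal p) normalizedLebesgueR = 1 ∧
        eLpNorm g (ENNReal.ofReal q) normalizedLebesgueR = 1 ∧
        (∃ c₁ s : ℝ, 0 < c₁ ∧ 0 < s ∧ ∀ x, f x = c₁ * Real.exp (-s * x ^ 2 / 2)) ∧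
        (∃ c₂ t : ℝ, 0 < c₂ ∧ 0 < t ∧ ∀ x, g x = c₂ * Real.exp (-t * x ^ 2 / 2)) ∧
        c = eLpNorm (gaussConv B₁ B₂ J f g) (ENNReal.ofReal r) normalizedLebesgueR} := by
  refine le_antisymm (sSup_le ?_) (sSup_le_sSup ?_)
  · rintro _ ⟨f, g, hf, hg, hf0, hg0, hfp, hgq, rfl⟩
    exact eLpNorm_gaussConv_le hp hq hr hJ (fun f g hf hg hfp hgq ↦
      le_sSup ⟨f, g, hfp, hgq, hf, hg, rfl⟩) hf hg hf0 hg0 hfp hgq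
  · rintro _ ⟨f, g, hfp, hgq, (hf : IsCenteredGaussian f), (hg : IsCenteredGaussian g), rfl⟩
    exact ⟨f, g, hf.continuous.measurable, hg.continuous.measurable, fun x ↦ (hf.pos x).le,
      fun x ↦ (hg.pos x).le, hfp, hgq, rfl⟩

theorem lieb_corollary_gaussian_maximizers
    (p q r : ℝ) (hp : 1 ≤ p) (hq : 1 ≤ q) (hr : 1 < r)
    (B₁ B₂ : (Fin 2 → ℝ) →ₗ[ℝ] ℝ)
    (J : Matrix (Fin 2) (Fin 2) ℝ) (hJ : J.PosSemidef) :
    sSup {c : ENNReal | ∃ f g : ℝ → ℝ,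
        Measurable f ∧ Measurable g ∧ (∀ x, 0 ≤ f x) ∧ (∀ x, 0 ≤ g x) ∧
        eLpNorm f (ENNReal.ofReal p) normalizedLebesgueR = 1 ∧
        eLpNorm g (ENNReal.ofReal q) normalizedLebesgueR = 1 ∧
        c = eLpNorm (gaussConv B₁ B₂ J f g) (ENNReal.ofReal r) normalizedLebesgueR}
    = sSup {c : ENNReal | ∃ f g : ℝ → ℝ,
        eLpNorm f (ENNReal.ofReal p) normalizedLebesgueR = 1 ∧
        eLpNorm g (ENNReal.ofReal q) normalizedLebesgueR = 1 ∧
        (∃ c₁ s : ℝ, 0 < c₁ ∧ 0 < s ∧ ∀ x, f x = c₁ * Real.exp (-s * x ^ 2 / 2)) ∧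
        (∃ c₂ t : ℝ, 0 < c₂ ∧ 0 < t ∧ ∀ x, g x = c₂ * Real.exp (-t * x ^ 2 / 2)) ∧
        c = eLpNorm (gaussConv B₁ B₂ J f g) (ENNReal.ofReal r) normalizedLebesgueR} := by
  exact lieb_corollary_gaussian_maximizers_general p q r (one_pos.trans_le hp)
    (one_pos.trans_le hq) hr.le B₁ B₂ J hJ
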